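/- Assume φ* = 1 and θ < 1. Then for all a, x ∈ ℕ₀ with a < x: lim_{q↓0} (Φ_q(a) − Φ_q(x))/q = ∫_0^1 (v^a − v^x) exp{−∫_θ^v μ(1 − r̃(w))/(λ(p̃(w) − w)) dw} / (λ(p̃(v) − v)) dv, both sides taking values in [0,∞]. -/

import Mathlib

open MeasureTheory Filter Set

/-- The probability generating function of the offspring distribution `p`. -/
noncomputable def ptilde (p : ℕ → ℝ) (z : ℝ) : ℝ := ∑' k, p k * z ^ k

/-- The p.g.f. of the immigration/culling mechanism: `rneg` is `r_{-1}`,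
`r k` for `k ≥ 1` are the immigration probabilities (we require `r 0 = 0`). -/
noncomputable def rtilde (rneg : ℝ) (r : ℕ → ℝ) (z : ℝ) : ℝ :=
  rneg / z + ∑' k, r k * z ^ k

/-- `f : ℕ → ℝ` is `q`-harmonic for the branching process with branching mechanism `p`
(rate `lam`) and immigration/culling mechanism `(rneg, r)` (rate `mu`). -/
def IsQHarmonic (lam mu q : ℝ) (p : ℕ → ℝ) (rneg : ℝ) (r : ℕ → ℝ) (f : ℕ → ℝ) : Prop :=
  ∀ x : ℕ, 1 ≤ x →
    (q + lam * x + mu) * f x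
      = lam * x * (∑' k, p k * f (x + k - 1))
        + mu * (rneg * f (x - 1) + ∑' k, r k * f (x + k))

/-- The harmonic function `Φ_q`; `φ` is the smallest fixed point of `ptilde p` in `(0,1]`
and `θ` is the delimiter `θ_q`. -/
noncomputable def Phi (lam mu : ℝ) (p : ℕ → ℝ) (rneg : ℝ) (r : ℕ → ℝ)
    (φ θ q : ℝ) (x : ℕ) : ℝ :=
  q * ∫ v in (0:ℝ)..φ,
      Real.exp (-∫ w in θ..v,
          (q + mu * (1 - rtilde rneg r w)) / (lam * |ptilde p w - w|))
        / (lam * |ptilde p v - v|) * v ^ x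

/-- The harmonic function `Ψ_q`. -/
noncomputable def Psi (lam mu : ℝ) (p : ℕ → ℝ) (rneg : ℝ) (r : ℕ → ℝ)
    (φ q : ℝ) (x : ℕ) : ℝ :=
  1 - q * ∫ v in φ..(1:ℝ),
      Real.exp (-∫ w in v..(1:ℝ),
          (q + mu * (1 - rtilde rneg r w)) / (lam * |ptilde p w - w|))
        / (lam * |ptilde p v - v|) * v ^ x

/-- Condition (E'): `∫_v^1 dz/(z - ptilde p z) < ∞` for some `v ∈ (φ, 1)`. -/
def CondE (p : ℕ → ℝ) (φ : ℝ) : Prop :=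
  ∃ v, φ < v ∧ v < 1 ∧
    IntervalIntegrable (fun z => 1 / (z - ptilde p z)) MeasureTheory.volume v 1

open Topology

lemma aux_dct {α : Type*} [MeasurableSpace α] (μ : Measure α) [IsFiniteMeasure μ]
    (F : ℝ → α → ENNReal) (f : α → ENNReal) (C : ENNReal) (hC : C ≠ ⊤)
    (hm : ∀ q, 0 < q → AEMeasurable (F q) μ)
    (hb : ∀ q, 0 < q → ∀ᵐ v ∂μ, F q v ≤ f v + C)
    (hl : ∀ᵐ v ∂μ, Tendsto (fun q => F q v) (𝓝[>] 0) (𝓝 (f v))) :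
    Tendsto (fun q => ∫⁻ v, F q v ∂μ) (𝓝[>] 0) (𝓝 (∫⁻ v, f v ∂μ)) := by
  apply Filter.tendsto_of_seq_tendsto
  intro u hu
  have hpos : ∀ᶠ n in atTop, 0 < u n := hu.eventually self_mem_nhdsWithin
  obtain ⟨N, hN⟩ := eventually_atTop.1 hpos
  rw [← tendsto_add_atTop_iff_nat N]
  have hu' : Tendsto (fun n => u (n + N)) atTop (𝓝[>] 0) :=
    (tendsto_add_atTop_iff_nat N).2 hu
  have hup : ∀ n, 0 < u (n + N) := fun n => hN _ (by omega)
  have hl' : ∀ᵐ v ∂μ, Tendsto (fun n => F (u (n + N)) v) atTop (𝓝 (f v)) := by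
    filter_upwards [hl] with v hv using hv.comp hu'
  by_cases hf : ∫⁻ v, f v ∂μ = ⊤
  · have h1 := lintegral_liminf_le' (u := atTop) (fun n => hm _ (hup n))
    have h2 : ∫⁻ v, liminf (fun n => F (u (n + N)) v) atTop ∂μ = ∫⁻ v, f v ∂μ := by
      apply lintegral_congr_ae
      filter_upwards [hl'] with v hv using hv.liminf_eq
    rw [h2] at h1
    apply tendsto_of_le_liminf_of_limsup_le h1
    rw [hf]; exact le_top
  · apply tendsto_lintegral_of_dominated_convergence' (fun v => f v + C)
      (fun n => hm _ (hup n)) (fun n => hb _ (hup n)) _ hl'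
    rw [lintegral_add_right _ measurable_const]
    simp [hf, hC, ENNReal.mul_eq_top]

lemma aux_main (D g : ℝ → ℝ) (J : Set ℝ) (θ c : ℝ) (θf : ℝ → ℝ)
    (hJ : J.OrdConnected) (hJ1 : Ioo 0 1 ⊆ J) (hJ2 : J ⊆ Ico 0 1)
    (hD : ContinuousOn D (Icc 0 1)) (hDpos : ∀ w ∈ Ico (0:ℝ) 1, 0 < D w)
    (hg : ContinuousOn g J) (hθ : θ ∈ J) (hθf : ∀ q, 0 < q → θf q ∈ J)
    (hle : ∀ q, 0 < q → θf q ≤ θ)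
    (hlim : Tendsto θf (𝓝[>] 0) (𝓝 θ))
    (hc : c ∈ J) (hcθ : c ≤ θ) (hcf : ∀ᶠ q in 𝓝[>] 0, c ≤ θf q)
    (h1 : ∀ q, 0 < q → ∀ w ∈ J, w ≤ θf q → q + g w ≤ 0 ∨ w = θf q)
    (h2 : ∀ q, 0 < q → ∀ w ∈ J, θf q ≤ w → 0 ≤ q + g w)
    (h3 : ∀ w ∈ J, θ ≤ w → 0 ≤ g w) (a x : ℕ) (hax : a < x) :
    Tendsto (fun q => ENNReal.ofReal
      ((q * (∫ v in (0:ℝ)..1, Real.exp (-∫ w in (θf q)..v, (q + g w) / D w) / D v * v ^ a)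
       - q * (∫ v in (0:ℝ)..1, Real.exp (-∫ w in (θf q)..v, (q + g w) / D w) / D v * v ^ x)) / q))
      (𝓝[>] 0)
      (𝓝 (∫⁻ v in Ioo (0:ℝ) 1, ENNReal.ofReal ((v ^ a - v ^ x)
            * Real.exp (-∫ w in θ..v, g w / D w) / D v))) := by
  have hDJ : ContinuousOn D J := hD.mono (hJ2.trans Ico_subset_Icc_self)
  have hDne : ∀ w ∈ J, D w ≠ 0 := fun w hw => (hDpos w (hJ2 hw)).ne'
  have hk : ∀ q : ℝ, ContinuousOn (fun w => (q + g w) / D w) J := fun q =>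
    (continuousOn_const.add hg).div hDJ hDne
  have hk0 : ContinuousOn (fun w => g w / D w) J := hg.div hDJ hDne
  have hk1 : ContinuousOn (fun w => 1 / D w) J := continuousOn_const.div hDJ hDne
  have hint : ∀ k : ℝ → ℝ, ContinuousOn k J → ∀ u ∈ J, ∀ v ∈ J,
      IntervalIntegrable k volume u v := fun k hk u hu v hv =>
    (hk.mono (hJ.uIcc_subset hu hv)).intervalIntegrable
  set Γ : ℝ → ℝ → ℝ := fun q v => ∫ w in (θf q)..v, (q + g w) / D w with hΓ
  -- nonnegativity
  have hΓ0 : ∀ q, 0 < q → ∀ v ∈ J, 0 ≤ Γ q v := by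
    intro q hq v hv
    rcases le_total (θf q) v with h | h
    · apply intervalIntegral.integral_nonneg h
      intro w hw
      have hwJ : w ∈ J := hJ.out (hθf q hq) hv hw
      exact div_nonneg (h2 q hq w hwJ hw.1) (hDpos w (hJ2 hwJ)).le
    · simp only [hΓ]
      rw [intervalIntegral.integral_symm, ← intervalIntegral.integral_neg]
      rw [intervalIntegral.integral_of_le h, integral_Ioc_eq_integral_Ioo]
      apply setIntegral_nonneg measurableSet_Ioo
      intro w hw
      have hwJ : w ∈ J := hJ.out hv (hθf q hq) ⟨hw.1.le, hw.2.le⟩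
      have := (h1 q hq w hwJ hw.2.le).resolve_right hw.2.ne
      rw [← neg_div]
      exact div_nonneg (by linarith) (hDpos w (hJ2 hwJ)).le
  -- derivative
  have hΓd : ∀ q, 0 < q → ∀ v ∈ Ioo (0:ℝ) 1, HasDerivAt (Γ q) ((q + g v) / D v) v := by
    intro q hq v hv
    have hkq := (hk q).mono hJ1
    exact intervalIntegral.integral_hasDerivAt_right
      (hint _ (hk q) _ (hθf q hq) _ (hJ1 hv))
      (hkq.stronglyMeasurableAtFilter isOpen_Ioo v hv)
      (hkq.continuousAt (isOpen_Ioo.mem_nhds hv))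
  have hΓc : ∀ q, 0 < q → ContinuousOn (Γ q) (Ioo 0 1) := fun q hq v hv =>
    (hΓd q hq v hv).continuousAt.continuousWithinAt
  have hEc : ∀ q, 0 < q → ContinuousOn (fun v => Real.exp (-Γ q v) / D v) (Ioo 0 1) :=
    fun q hq => (Real.continuous_exp.comp_continuousOn (hΓc q hq).neg).div
      (hDJ.mono hJ1) (fun w hw => hDne w (hJ1 hw))
  -- bound on compact
  have hbd : ∀ b < 1, ∃ C, 0 ≤ C ∧ ∀ v ∈ Icc 0 b, 1 / D v ≤ C := by
    intro b hb
    have hcont : ContinuousOn (fun w => 1 / D w) (Icc 0 b) :=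
      continuousOn_const.div (hD.mono (Icc_subset_Icc_right hb.le))
        (fun w hw => (hDpos w ⟨hw.1, hw.2.trans_lt hb⟩).ne')
    obtain ⟨C, hC⟩ := isCompact_Icc.exists_bound_of_continuousOn hcont
    refine ⟨max C 0, le_max_right _ _, fun v hv => ?_⟩
    exact (le_abs_self _).trans ((hC v hv).trans (le_max_left _ _))
  have hEle : ∀ q, 0 < q → ∀ v ∈ J, Real.exp (-Γ q v) / D v ≤ 1 / D v := by
    intro q hq v hv
    apply div_le_div_of_nonneg_right _ (hDpos v (hJ2 hv)).le
    rw [Real.exp_le_one_iff]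
    linarith [hΓ0 q hq v hv]
  have hE0 : ∀ q, ∀ v ∈ J, 0 ≤ Real.exp (-Γ q v) / D v := fun q v hv =>
    div_nonneg (Real.exp_pos _).le (hDpos v (hJ2 hv)).le
  -- integrability
  have hθ1 : θ < 1 := (hJ2 hθ).2
  have hθ0 : 0 ≤ θ := (hJ2 hθ).1
  have hEint : ∀ q, 0 < q → IntegrableOn (fun v => Real.exp (-Γ q v) / D v) (Ioo 0 1) := by
    intro q hq
    set b := (θ + 1) / 2 with hb
    have hb1 : b < 1 := by rw [hb]; linarith
    have hb0 : 0 < b := by rw [hb]; linarith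
    have hbθ : θ < b := by rw [hb]; linarith
    have hA : IntegrableOn (fun v => Real.exp (-Γ q v) / D v) (Ioo 0 b) := by
      obtain ⟨C, hC0, hC⟩ := hbd b hb1
      refine IntegrableOn.of_bound (C := C) (by simp)
        (((hEc q hq).mono (Ioo_subset_Ioo_right hb1.le)).aestronglyMeasurable measurableSet_Ioo) ?_
      rw [ae_restrict_iff' measurableSet_Ioo]
      refine ae_of_all _ fun v hv => ?_
      have hvJ : v ∈ J := hJ1 ⟨hv.1, hv.2.trans hb1⟩
      rw [Real.norm_of_nonneg (hE0 q v hvJ)]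
      exact (hEle q hq v hvJ).trans (hC v ⟨hv.1.le, hv.2.le⟩)
    have hB : IntegrableOn (fun v => Real.exp (-Γ q v) / D v) (Ioc b 1) := by
      have hlimb : Tendsto (fun n : ℕ => 1 - (1 - b) * (1 / ((n:ℝ) + 1))) atTop (𝓝 1) := by
        have := (tendsto_one_div_add_atTop_nhds_zero_nat (𝕜 := ℝ)).const_mul (1 - b)
        simpa using this.const_sub 1
      have hd1 : ∀ n : ℕ, 1 - (1 - b) * (1 / ((n:ℝ) + 1)) < 1 := fun n => by
        have : 0 < (1 - b) * (1 / ((n:ℝ) + 1)) := mul_pos (by linarith) (by positivity)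
        linarith
      have hdb : ∀ n : ℕ, b ≤ 1 - (1 - b) * (1 / ((n:ℝ) + 1)) := fun n => by
        have h5 : 1 / ((n:ℝ) + 1) ≤ 1 := by
          rw [div_le_one (by positivity)]; linarith [(Nat.cast_nonneg n : (0:ℝ) ≤ n)]
        nlinarith
      have key : ∀ d, b ≤ d → d < 1 → IntegrableOn (fun v => Real.exp (-Γ q v) / D v) (Ioc b d) ∧
          ∫ v in Ioc b d, ‖Real.exp (-Γ q v) / D v‖ ≤ 1 / q := by
        intro d hbd hd
        have hsub : Icc b d ⊆ Ioo 0 1 := fun v hv => ⟨hb0.trans_le hv.1, hv.2.trans_lt hd⟩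
        have hi : IntervalIntegrable (fun v => Real.exp (-Γ q v) / D v) volume b d :=
          ContinuousOn.intervalIntegrable (by rw [uIcc_of_le hbd]; exact (hEc q hq).mono hsub)
        refine ⟨(intervalIntegrable_iff_integrableOn_Ioc_of_le hbd).1 hi, ?_⟩
        rw [← intervalIntegral.integral_of_le hbd]
        have hder : ∀ v ∈ uIcc b d, HasDerivAt (fun v => - Real.exp (-Γ q v) / q)
            ((Real.exp (-Γ q v) / D v) * ((q + g v) / q)) v := by
          intro v hv
          rw [uIcc_of_le hbd] at hv
          have := (((hΓd q hq v (hsub hv)).neg.exp).neg).div_const q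
          refine this.congr_deriv ?_
          simp only [Pi.neg_apply]
          ring
        have hci : IntervalIntegrable (fun v => (Real.exp (-Γ q v) / D v) * ((q + g v) / q))
            volume b d := by
          apply ContinuousOn.intervalIntegrable
          rw [uIcc_of_le hbd]
          exact ((hEc q hq).mono hsub).mul
            (((continuousOn_const.add hg).mono (hsub.trans hJ1)).div_const q)
        have hFTC := intervalIntegral.integral_eq_sub_of_hasDerivAt hder hci
        calc ∫ v in b..d, ‖Real.exp (-Γ q v) / D v‖
            ≤ ∫ v in b..d, (Real.exp (-Γ q v) / D v) * ((q + g v) / q) := by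
              apply intervalIntegral.integral_mono_on hbd hi.norm hci
              intro v hv
              have hvJ := hJ1 (hsub hv)
              rw [Real.norm_of_nonneg (hE0 q v hvJ)]
              apply le_mul_of_one_le_right (hE0 q v hvJ)
              rw [one_le_div hq]
              linarith [h3 v hvJ (hbθ.le.trans hv.1)]
          _ = _ := hFTC
          _ ≤ 1 / q := by
              rw [← sub_div]
              apply div_le_div_of_nonneg_right _ hq.le
              have e1 : Real.exp (-Γ q b) ≤ 1 := by
                rw [Real.exp_le_one_iff]
                linarith [hΓ0 q hq b (hJ1 ⟨hb0, hb1⟩)]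
              linarith [Real.exp_pos (-Γ q d)]
      exact integrableOn_Ioc_of_intervalIntegral_norm_bounded_right
        (fun n => (key _ (hdb n) (hd1 n)).1) hlimb
        (Eventually.of_forall fun n => (key _ (hdb n) (hd1 n)).2)
    have hA' : IntegrableOn (fun v => Real.exp (-Γ q v) / D v) (Ioc 0 b) :=
      (integrableOn_Ioc_iff_integrableOn_Ioo (by finiteness)).2 hA
    have := hA'.union hB
    rw [Ioc_union_Ioc_eq_Ioc hb0.le hb1.le] at this
    exact this.mono_set Ioo_subset_Ioc_self
  have hEpow : ∀ q, 0 < q → ∀ n : ℕ,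
      IntegrableOn (fun v => Real.exp (-Γ q v) / D v * v ^ n) (Ioo 0 1) := by
    intro q hq n
    refine Integrable.mul_bdd (c := 1) (hEint q hq) (by fun_prop) ?_
    rw [ae_restrict_iff' measurableSet_Ioo]
    refine ae_of_all _ fun v hv => ?_
    rw [norm_pow, Real.norm_of_nonneg hv.1.le]
    exact pow_le_one₀ hv.1.le hv.2.le
  have hpow : ∀ v ∈ Ioo (0:ℝ) 1, 0 ≤ v ^ a - v ^ x := fun v hv =>
    sub_nonneg.2 (pow_le_pow_of_le_one hv.1.le hv.2.le hax.le)
  have hpow1 : ∀ v ∈ Ioo (0:ℝ) 1, v ^ a - v ^ x ≤ 1 := fun v hv => by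
    have := pow_le_one₀ (n := a) hv.1.le hv.2.le
    have := pow_nonneg hv.1.le x
    linarith
  -- rewrite
  have hrew : ∀ q, 0 < q → ENNReal.ofReal
      ((q * (∫ v in (0:ℝ)..1, Real.exp (-Γ q v) / D v * v ^ a)
       - q * (∫ v in (0:ℝ)..1, Real.exp (-Γ q v) / D v * v ^ x)) / q)
      = ∫⁻ v in Ioo (0:ℝ) 1, ENNReal.ofReal ((v ^ a - v ^ x) * Real.exp (-Γ q v) / D v) := by
    intro q hq
    rw [← mul_sub, mul_div_cancel_left₀ _ hq.ne', intervalIntegral.integral_of_le zero_le_one,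
      intervalIntegral.integral_of_le zero_le_one, integral_Ioc_eq_integral_Ioo,
      integral_Ioc_eq_integral_Ioo, ← integral_sub (hEpow q hq a) (hEpow q hq x)]
    have hsub : IntegrableOn (fun v => Real.exp (-Γ q v) / D v * v ^ a
      - Real.exp (-Γ q v) / D v * v ^ x) (Ioo 0 1) := (hEpow q hq a).sub (hEpow q hq x)
    rw [MeasureTheory.ofReal_integral_eq_lintegral_ofReal hsub]
    · apply lintegral_congr
      intro v
      congr 1
      ring
    · rw [EventuallyLE, ae_restrict_iff' measurableSet_Ioo]
      refine ae_of_all _ fun v hv => ?_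
      simp only [Pi.zero_apply]
      rw [← mul_sub]
      exact mul_nonneg (hE0 q v (hJ1 hv)) (hpow v hv)
  -- pointwise limit
  have hΓlim : ∀ v ∈ Ioo (0:ℝ) 1, Tendsto (fun q => Γ q v) (𝓝[>] 0)
      (𝓝 (∫ w in θ..v, g w / D w)) := by
    intro v hv
    have hprim : ∀ k : ℝ → ℝ, ContinuousOn k J →
        Tendsto (fun q => ∫ w in θ..(θf q), k w) (𝓝[>] 0) (𝓝 0) := by
      intro k hk
      have hco := intervalIntegral.continuousOn_primitive_interval' (μ := volume) (a := θ)
        (hint k hk c hc θ hθ) right_mem_uIcc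
      have h5 := hco θ right_mem_uIcc
      rw [ContinuousWithinAt, intervalIntegral.integral_same] at h5
      refine h5.comp (tendsto_nhdsWithin_iff.2 ⟨hlim, ?_⟩)
      filter_upwards [hcf, self_mem_nhdsWithin] with q hq1 hq2
      rw [uIcc_of_le hcθ]
      exact ⟨hq1, hle q hq2⟩
    have hq0 : Tendsto (fun q : ℝ => q) (𝓝[>] 0) (𝓝 0) := tendsto_nhdsWithin_of_tendsto_nhds tendsto_id
    have hlim2 : Tendsto (fun q => q * ((∫ w in θ..v, 1 / D w) - ∫ w in θ..(θf q), 1 / D w)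
        + ((∫ w in θ..v, g w / D w) - ∫ w in θ..(θf q), g w / D w)) (𝓝[>] 0)
        (𝓝 (0 * ((∫ w in θ..v, 1 / D w) - 0) + ((∫ w in θ..v, g w / D w) - 0))) :=
      (hq0.mul ((hprim _ hk1).const_sub _)).add ((hprim _ hk0).const_sub _)
    simp only [zero_mul, zero_add, sub_zero] at hlim2
    refine hlim2.congr' ?_
    filter_upwards [self_mem_nhdsWithin] with q hq
    have hq : 0 < q := hq
    have hvJ := hJ1 hv
    rw [intervalIntegral.integral_interval_sub_left (hint _ hk1 _ hθ _ hvJ)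
        (hint _ hk1 _ hθ _ (hθf q hq)),
      intervalIntegral.integral_interval_sub_left (hint _ hk0 _ hθ _ hvJ)
        (hint _ hk0 _ hθ _ (hθf q hq)), ← intervalIntegral.integral_const_mul,
      ← intervalIntegral.integral_add ((hint _ hk1 _ (hθf q hq) _ hvJ).const_mul q)
        (hint _ hk0 _ (hθf q hq) _ hvJ)]
    apply intervalIntegral.integral_congr
    intro w _
    simp only []
    ring
  -- comparison
  have hcmp : ∀ q, 0 < q → ∀ v ∈ J, θ ≤ v → (∫ w in θ..v, g w / D w) ≤ Γ q v := by
    intro q hq v hv hθv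
    have e : Γ q v = (∫ w in (θf q)..θ, (q + g w) / D w) + ∫ w in θ..v, (q + g w) / D w :=
      (intervalIntegral.integral_add_adjacent_intervals (hint _ (hk q) _ (hθf q hq) _ hθ)
        (hint _ (hk q) _ hθ _ hv)).symm
    have e1 : 0 ≤ ∫ w in (θf q)..θ, (q + g w) / D w := hΓ0 q hq θ hθ
    have e2 : (∫ w in θ..v, g w / D w) ≤ ∫ w in θ..v, (q + g w) / D w := by
      apply intervalIntegral.integral_mono_on hθv (hint _ hk0 _ hθ _ hv) (hint _ (hk q) _ hθ _ hv)
      intro w hw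
      apply div_le_div_of_nonneg_right (by linarith) (hDpos w (hJ2 (hJ.out hθ hv hw))).le
    linarith
  obtain ⟨C, hC0, hC⟩ := hbd θ hθ1
  have main := aux_dct (volume.restrict (Ioo (0:ℝ) 1))
    (fun q v => ENNReal.ofReal ((v ^ a - v ^ x) * Real.exp (-Γ q v) / D v))
    (fun v => ENNReal.ofReal ((v ^ a - v ^ x) * Real.exp (-∫ w in θ..v, g w / D w) / D v))
    (ENNReal.ofReal C) ENNReal.ofReal_ne_top ?_ ?_ ?_
  · refine main.congr' ?_
    filter_upwards [self_mem_nhdsWithin] with q hq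
    exact (hrew q hq).symm
  · intro q hq
    have h6 : ContinuousOn (fun v => (v ^ a - v ^ x) * (Real.exp (-Γ q v) / D v)) (Ioo 0 1) :=
      ContinuousOn.mul (by fun_prop) (hEc q hq)
    have h7 := (h6.aemeasurable (μ := volume) measurableSet_Ioo).ennreal_ofReal
    simpa only [mul_div_assoc] using h7
  · intro q hq
    rw [ae_restrict_iff' measurableSet_Ioo]
    refine ae_of_all _ fun v hv => ?_
    have hvJ := hJ1 hv
    rcases le_total θ v with h | h
    · refine le_trans (ENNReal.ofReal_le_ofReal ?_) le_self_add
      apply div_le_div_of_nonneg_right _ (hDpos v (hJ2 hvJ)).le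
      apply mul_le_mul_of_nonneg_left _ (hpow v hv)
      apply Real.exp_le_exp.2
      linarith [hcmp q hq v hvJ h]
    · refine le_trans (ENNReal.ofReal_le_ofReal ?_) le_add_self
      rw [mul_div_assoc]
      refine le_trans (mul_le_of_le_one_left (hE0 q v hvJ) (hpow1 v hv)) ?_
      exact (hEle q hq v hvJ).trans (hC v ⟨hv.1.le, h⟩)
  · rw [ae_restrict_iff' measurableSet_Ioo]
    refine ae_of_all _ fun v hv => ?_
    apply ENNReal.tendsto_ofReal
    apply Tendsto.div_const
    apply Tendsto.const_mul
    exact (Real.continuous_exp.tendsto _).comp (hΓlim v hv).neg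

lemma pgf_summable (s : ℕ → ℝ) (hs : ∀ k, 0 ≤ s k) (hS : Summable s) (w : ℝ)
    (hw : w ∈ Icc (0:ℝ) 1) : Summable (fun k => s k * w ^ k) :=
  Summable.of_nonneg_of_le (fun k => mul_nonneg (hs k) (pow_nonneg hw.1 k))
    (fun k => mul_le_of_le_one_right (hs k) (pow_le_one₀ hw.1 hw.2)) hS

lemma pgf_le (s : ℕ → ℝ) (hs : ∀ k, 0 ≤ s k) (hS : Summable s) (w : ℝ)
    (hw : w ∈ Icc (0:ℝ) 1) : ptilde s w ≤ ∑' k, s k :=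
  (pgf_summable s hs hS w hw).tsum_le_tsum
    (fun k => mul_le_of_le_one_right (hs k) (pow_le_one₀ hw.1 hw.2)) hS

lemma pgf_cont (s : ℕ → ℝ) (hs : ∀ k, 0 ≤ s k) (hS : Summable s) :
    ContinuousOn (ptilde s) (Icc 0 1) := by
  refine continuousOn_tsum (u := s) (fun k => by fun_prop) hS ?_
  intro k w hw
  rw [Real.norm_of_nonneg (mul_nonneg (hs k) (pow_nonneg hw.1 k))]
  exact mul_le_of_le_one_right (hs k) (pow_le_one₀ hw.1 hw.2)

lemma pgf_convex (s : ℕ → ℝ) (hs : ∀ k, 0 ≤ s k) (hS : Summable s) :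
    ConvexOn ℝ (Icc 0 1) (ptilde s) := by
  refine ⟨convex_Icc 0 1, fun y hy z hz a b ha hb hab => ?_⟩
  have hm := convex_Icc (0:ℝ) 1 hy hz ha hb hab
  have sy := (pgf_summable s hs hS y hy).mul_left a
  have sz := (pgf_summable s hs hS z hz).mul_left b
  simp only [ptilde, smul_eq_mul] at hm ⊢
  rw [← tsum_mul_left, ← tsum_mul_left, ← sy.tsum_add sz]
  refine (pgf_summable s hs hS _ hm).tsum_le_tsum (fun k => ?_) (sy.add sz)
  have := (convexOn_pow k).2 (mem_Ici.2 hy.1) (mem_Ici.2 hz.1) ha hb hab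
  simp only [smul_eq_mul] at this
  have := mul_le_mul_of_nonneg_left this (hs k)
  linarith

lemma ptilde_zero (p : ℕ → ℝ) : ptilde p 0 = p 0 := by
  rw [ptilde, tsum_eq_single 0]
  · simp
  · intro k hk
    simp [hk]

/-- assume `φ* = 1` and `θ < 1`. For all `a < x` in `ℕ`,
`lim_{q↓0} (Φ_q(a) - Φ_q(x))/q
  = ∫_0^1 (v^a - v^x) exp{-∫_θ^v μ(1-r̃(w))/(λ(p̃(w)-w)) dw}/(λ(p̃(v)-v)) dv`,
both sides taking values in `[0,∞]` (formalized in `ℝ≥0∞` via `ENNReal.ofReal`). -/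
theorem stmt15 (lam mu rneg : ℝ) (p r : ℕ → ℝ) (φ θ : ℝ) (θf : ℝ → ℝ)
    (hlam : 0 < lam)
    (hp : ∀ k, 0 ≤ p k) (hpsum : ∑' k, p k = 1) (hp0 : 0 < p 0) (hp1 : p 1 = 0)
    (hφ0 : 0 < φ) (hφfix : ptilde p φ = φ)
    (hφlo : ∀ z : ℝ, 0 < z → z < φ → z < ptilde p z)
    (hφeq : φ = 1)
    (hmu : 0 ≤ mu) (hrneg : 0 ≤ rneg) (hr : ∀ k, 0 ≤ r k) (hr0 : r 0 = 0)
    (hrsum : rneg + ∑' k, r k = 1)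
    (hnontriv : p 0 < 1 ∨ ∃ k : ℕ, 1 ≤ k ∧ 0 < mu * r k)
    (hθfpos : 0 < mu * rneg → ∀ q : ℝ, 0 < q →
      θf q ∈ Set.Ioo (0:ℝ) 1 ∧ q = mu * (rtilde rneg r (θf q) - 1))
    (hθfzero : mu * rneg = 0 → ∀ q : ℝ, 0 < q → θf q = 0)
    (hθpos : 0 < mu * rneg → θ ∈ Set.Ioc (0:ℝ) 1 ∧ rtilde rneg r θ = 1 ∧
      ∀ z ∈ Set.Ioc (0:ℝ) 1, rtilde rneg r z = 1 → θ ≤ z)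
    (hθzero : mu * rneg = 0 → θ = 0)
    (hθlt : θ < 1) :
    ∀ a x : ℕ, a < x →
      Filter.Tendsto (fun q =>
          ENNReal.ofReal ((Phi lam mu p rneg r φ (θf q) q a
            - Phi lam mu p rneg r φ (θf q) q x) / q))
        (nhdsWithin 0 (Set.Ioi 0))
        (nhds (∫⁻ v in Set.Ioo (0:ℝ) 1,
          ENNReal.ofReal ((v ^ a - v ^ x)
            * Real.exp (-∫ w in θ..v, mu * (1 - rtilde rneg r w)
                / (lam * (ptilde p w - w)))
            / (lam * (ptilde p v - v))))) := by
  subst hφeq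
  intro a x hax
  have hps : Summable p := by
    by_contra h
    rw [tsum_eq_zero_of_not_summable h] at hpsum
    norm_num at hpsum
  have hpc := pgf_cont p hp hps
  have hDc : ContinuousOn (fun w => lam * |ptilde p w - w|) (Icc 0 1) :=
    continuousOn_const.mul ((hpc.sub continuousOn_id).abs)
  have hpgt : ∀ w ∈ Ico (0:ℝ) 1, 0 < ptilde p w - w := by
    intro w hw
    rcases hw.1.eq_or_lt with h | h
    · rw [← h, ptilde_zero]; linarith
    · linarith [hφlo w h hw.2]
  have hDpos : ∀ w ∈ Ico (0:ℝ) 1, 0 < lam * |ptilde p w - w| := fun w hw =>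
    mul_pos hlam (abs_pos.2 (hpgt w hw).ne')
  have hDeq : ∀ w ∈ Ico (0:ℝ) 1, lam * |ptilde p w - w| = lam * (ptilde p w - w) := fun w hw => by
    rw [abs_of_pos (hpgt w hw)]
  have fin : ∀ J : Set ℝ, J.OrdConnected → Ioo 0 1 ⊆ J → J ⊆ Ico 0 1 → θ ∈ J →
      (∫⁻ v in Set.Ioo (0:ℝ) 1,
          ENNReal.ofReal ((v ^ a - v ^ x)
            * Real.exp (-∫ w in θ..v, mu * (1 - rtilde rneg r w)
                / (lam * (ptilde p w - w)))
            / (lam * (ptilde p v - v)))) = (∫⁻ v in Set.Ioo (0:ℝ) 1,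
          ENNReal.ofReal ((v ^ a - v ^ x)
            * Real.exp (-∫ w in θ..v, mu * (1 - rtilde rneg r w)
                / (lam * |ptilde p w - w|))
            / (lam * |ptilde p v - v|))) := by
    intro J hJ hJ1 hJ2 hθJ
    apply setLIntegral_congr_fun measurableSet_Ioo
    intro v hv
    have : (∫ w in θ..v, mu * (1 - rtilde rneg r w) / (lam * (ptilde p w - w)))
        = ∫ w in θ..v, mu * (1 - rtilde rneg r w) / (lam * |ptilde p w - w|) := by
      apply intervalIntegral.integral_congr
      intro w hw
      simp only []
      rw [hDeq w (hJ2 (hJ.uIcc_subset hθJ (hJ1 hv) hw))]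
    simp only []
    rw [this, hDeq v (hJ2 (hJ1 hv))]
  simp only [Phi]
  rcases (mul_nonneg hmu hrneg).eq_or_lt with h0 | hpos
  · have h0 := h0.symm
    have hθ0 := hθzero h0
    have hθf0 := hθfzero h0
    have hgc : ContinuousOn (fun w => mu * (1 - rtilde rneg r w)) (Ico 0 1) ∧
        ∀ w ∈ Ico (0:ℝ) 1, 0 ≤ mu * (1 - rtilde rneg r w) := by
      rcases mul_eq_zero.1 h0 with h | h
      · simp [h, continuousOn_const]
      · have hrs1 : ∑' k, r k = 1 := by rw [h] at hrsum; linarith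
        have hrs : Summable r := by
          by_contra h
          rw [tsum_eq_zero_of_not_summable h] at hrs1
          norm_num at hrs1
        have e : ∀ w, rtilde rneg r w = ptilde r w := fun w => by simp [rtilde, ptilde, h]
        simp only [e]
        refine ⟨continuousOn_const.mul (continuousOn_const.sub
          ((pgf_cont r hr hrs).mono Ico_subset_Icc_self)), fun w hw => mul_nonneg hmu ?_⟩
        have := pgf_le r hr hrs w (Ico_subset_Icc_self hw)
        linarith
    rw [fin (Ico 0 1) ordConnected_Ico Ioo_subset_Ico_self le_rfl (by rw [hθ0]; simp)]
    refine aux_main (fun w => lam * |ptilde p w - w|) (fun w => mu * (1 - rtilde rneg r w))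
      (Ico 0 1) θ 0 θf ordConnected_Ico Ioo_subset_Ico_self le_rfl hDc hDpos hgc.1
      (by rw [hθ0]; simp) (fun q hq => by rw [hθf0 q hq]; simp)
      (fun q hq => by rw [hθf0 q hq, hθ0]) ?_ (by simp) hθ0.ge ?_ ?_ ?_ ?_ a x hax
    · rw [hθ0]
      refine tendsto_const_nhds.congr' ?_
      filter_upwards [self_mem_nhdsWithin] with q hq using (hθf0 q hq).symm
    · filter_upwards [self_mem_nhdsWithin] with q hq using (hθf0 q hq).ge
    · intro q hq w hw hwq
      right
      rw [hθf0 q hq] at hwq ⊢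
      exact le_antisymm hwq hw.1
    · intro q hq w hw _
      linarith [hgc.2 w hw]
    · intro w hw _
      exact hgc.2 w hw
  · obtain ⟨hθm, hθr, -⟩ := hθpos hpos
    have hθfp := hθfpos hpos
    have hmup : 0 < mu := pos_of_mul_pos_left hpos hrneg
    have hrnp : 0 < rneg := pos_of_mul_pos_right hpos hmu
    have hrs : Summable r := by
      by_contra h
      rw [tsum_eq_zero_of_not_summable h] at hrsum
      have e1 : 0 ≤ ∑' k, r k * θ ^ k :=
        tsum_nonneg fun k => mul_nonneg (hr k) (pow_nonneg hθm.1.le k)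
      have e2 : 1 < rneg / θ := by
        rw [lt_div_iff₀ hθm.1]; linarith
      rw [rtilde] at hθr
      linarith
    have hcv : StrictConvexOn ℝ (Ioc 0 1) (rtilde rneg r) := by
      have i1 : StrictConvexOn ℝ (Ioc (0:ℝ) 1) (fun z => z ^ (-1 : ℤ)) :=
        (strictConvexOn_zpow (by norm_num) (by norm_num)).subset (fun z hz => hz.1) (convex_Ioc 0 1)
      have i2 : ConvexOn ℝ (Ioc (0:ℝ) 1) (ptilde r) :=
        (pgf_convex r hr hrs).subset Ioc_subset_Icc_self (convex_Ioc 0 1)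
      refine ⟨convex_Ioc 0 1, fun y hy z hz hyz s t hs ht hst => ?_⟩
      have j1 := i1.2 hy hz hyz hs ht hst
      have j2 := i2.2 hy hz hs.le ht.le hst
      simp only [smul_eq_mul, zpow_neg_one] at j1 j2 ⊢
      simp only [ptilde] at j2
      simp only [rtilde, div_eq_mul_inv]
      have j3 := mul_lt_mul_of_pos_left j1 hrnp
      linarith
    have hr1 : rtilde rneg r 1 = 1 := by simp [rtilde, hrsum]
    have h1m : (1:ℝ) ∈ Ioc (0:ℝ) 1 := by simp
    have hbelow : ∀ w ∈ Icc θ 1, rtilde rneg r w ≤ 1 := by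
      intro w hw
      have := hcv.convexOn.le_max_of_mem_Icc hθm h1m hw
      simpa [hθr, hr1] using this
    have habove : ∀ w, 0 < w → w < θ → 1 < rtilde rneg r w := by
      intro w hw hwθ
      have := hcv.lt_on_openSegment (x := w) (y := 1) (z := θ) ⟨hw, hwθ.le.trans hθm.2⟩ h1m
        (hwθ.trans hθlt).ne (by rw [openSegment_eq_Ioo (hwθ.trans hθlt)]; exact ⟨hwθ, hθlt⟩)
      rw [hθr, hr1, lt_max_iff] at this
      exact this.resolve_right (lt_irrefl _)
    have hanti : ∀ y z, 0 < y → y ≤ z → z < θ → rtilde rneg r z ≤ rtilde rneg r y := by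
      intro y z hy hyz hz
      have := hcv.convexOn.le_max_of_mem_Icc (x := y) (y := θ) (z := z)
        ⟨hy, (hyz.trans hz.le).trans hθm.2⟩ hθm ⟨hyz, hz.le⟩
      rw [hθr, le_max_iff] at this
      exact this.resolve_right (not_le.2 (habove z (hy.trans_le hyz) hz))
    have hval : ∀ q, 0 < q → 1 < rtilde rneg r (θf q) := by
      intro q hq
      have := (hθfp q hq).2
      by_contra hh
      push Not at hh
      nlinarith
    have hlt : ∀ q, 0 < q → θf q < θ := by
      intro q hq
      by_contra hh
      push Not at hh
      have := hbelow _ ⟨hh, (hθfp q hq).1.2.le⟩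
      linarith [hval q hq]
    have hlow : ∀ z, 0 < z → z < θ → ∀ᶠ q in nhdsWithin 0 (Ioi 0), z < θf q := by
      intro z hz hzθ
      have hpz : 0 < mu * (rtilde rneg r z - 1) := mul_pos hmup (by linarith [habove z hz hzθ])
      filter_upwards [self_mem_nhdsWithin, nhdsWithin_le_nhds (Iio_mem_nhds hpz)] with q hq hq2
      by_contra hh
      push Not at hh
      have hq2 : q < mu * (rtilde rneg r z - 1) := hq2
      have k1 := hanti _ z (hθfp q hq).1.1 hh hzθ
      have k2 := (hθfp q hq).2
      have k3 := mul_le_mul_of_nonneg_left k1 hmu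
      linarith
    have hθI : θ ∈ Ioo (0:ℝ) 1 := ⟨hθm.1, hθlt⟩
    have hgc : ContinuousOn (fun w => mu * (1 - rtilde rneg r w)) (Ioo 0 1) := by
      refine continuousOn_const.mul (continuousOn_const.sub (ContinuousOn.add ?_ ?_))
      · exact continuousOn_const.div continuousOn_id (fun w hw => hw.1.ne')
      · exact (pgf_cont r hr hrs).mono Ioo_subset_Icc_self
    rw [fin (Ioo 0 1) ordConnected_Ioo le_rfl Ioo_subset_Ico_self hθI]
    refine aux_main (fun w => lam * |ptilde p w - w|) (fun w => mu * (1 - rtilde rneg r w))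
      (Ioo 0 1) θ (θ / 2) θf ordConnected_Ioo le_rfl Ioo_subset_Ico_self hDc hDpos hgc
      hθI (fun q hq => (hθfp q hq).1)
      (fun q hq => (hlt q hq).le) ?_ ⟨by linarith [hθm.1], by linarith [hθm.1]⟩
      (by linarith [hθm.1]) ?_ ?_ ?_ ?_ a x hax
    · rw [tendsto_order]
      constructor
      · intro b hb
        filter_upwards [hlow (max b (θ / 2)) (lt_max_of_lt_right (by linarith [hθm.1]))
          (max_lt hb (by linarith [hθm.1]))] with q hq
        exact (le_max_left _ _).trans_lt hq
      · intro b hb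
        filter_upwards [self_mem_nhdsWithin] with q hq
        exact (hlt q hq).trans hb
    · filter_upwards [hlow (θ / 2) (by linarith [hθm.1]) (by linarith [hθm.1])] with q hq
      exact hq.le
    · intro q hq w hw hwq
      left
      have k1 := hanti w _ hw.1 hwq (hlt q hq)
      have k2 := (hθfp q hq).2
      have k3 := mul_le_mul_of_nonneg_left k1 hmu
      linarith
    · intro q hq w hw hwq
      have k1 : rtilde rneg r w ≤ rtilde rneg r (θf q) := by
        have := hcv.convexOn.le_max_of_mem_Icc (x := θf q) (y := 1) (z := w)
          ⟨(hθfp q hq).1.1, (hθfp q hq).1.2.le⟩ h1m ⟨hwq, hw.2.le⟩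
        rwa [hr1, max_eq_left (hval q hq).le] at this
      have k2 := (hθfp q hq).2
      have k3 := mul_le_mul_of_nonneg_left k1 hmu
      linarith
    · intro w hw hwθ
      have := hbelow w ⟨hwθ, hw.2.le⟩
      exact mul_nonneg hmu (by linarith)
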